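/- arXiv:2112.12079 — 2 statements merged into one kernel-verified Lean document; each statement's English description precedes it below -/
import Mathlib

section
/- Let p be a prime and n ≥ 6 even. Then the polynomial Y(x) = p^{n-2} + p^{n-4}·x^2 + p^n·x^3 + x^n in ℤ[x] is either irreducible over ℤ, or has a factor whose degree is a multiple of (n-2)/2. -/
open Polynomial

lemma aux_A (p : ℕ) [Fact p.Prime] (g h : ℤ[X]) (k : ℕ) (hc : (g * h).coeff k ≠ 0) :
    ∃ i j, i + j = k ∧ g.coeff i ≠ 0 ∧ h.coeff j ≠ 0 ∧
      padicValInt p (g.coeff i) + padicValInt p (h.coeff j) ≤ padicValInt p ((g * h).coeff k) := by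
  by_contra! H
  have : (p : ℤ) ^ (padicValInt p ((g * h).coeff k) + 1) ∣ (g * h).coeff k := by
    conv_rhs => rw [coeff_mul]
    apply Finset.dvd_sum
    rintro ⟨i, j⟩ hij
    rw [Finset.HasAntidiagonal.mem_antidiagonal] at hij
    by_cases hi : g.coeff i = 0
    · simp [hi]
    by_cases hj : h.coeff j = 0
    · simp [hj]
    rw [padicValInt_dvd_iff]
    right
    rw [padicValInt.mul hi hj]
    exact H i j hij hi hj
  rw [padicValInt_dvd_iff] at this
  rcases this with h | h
  · exact hc h
  · omega

lemma aux_B (p : ℕ) [Fact p.Prime] (g h : ℤ[X]) (a b : ℕ) (ha : g.coeff a ≠ 0)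
    (hb : h.coeff b ≠ 0)
    (H : ∀ i j, i + j = a + b → i ≠ a → g.coeff i ≠ 0 → h.coeff j ≠ 0 →
      padicValInt p (g.coeff a) + padicValInt p (h.coeff b) <
        padicValInt p (g.coeff i) + padicValInt p (h.coeff j)) :
    (g * h).coeff (a + b) ≠ 0 ∧ padicValInt p ((g * h).coeff (a + b)) ≤
      padicValInt p (g.coeff a) + padicValInt p (h.coeff b) := by
  by_contra hcon
  have h1 : (p : ℤ) ^ (padicValInt p (g.coeff a) + padicValInt p (h.coeff b) + 1) ∣
      (g * h).coeff (a + b) := by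
    rw [padicValInt_dvd_iff]
    by_cases h0 : (g * h).coeff (a + b) = 0
    · exact Or.inl h0
    · right
      by_contra h2
      exact hcon ⟨h0, by omega⟩
  rw [coeff_mul, ← Finset.add_sum_erase _ _ (Finset.HasAntidiagonal.mem_antidiagonal.2 (rfl : (a, b).1 + (a, b).2 = a + b))] at h1
  have h2 : (p : ℤ) ^ (padicValInt p (g.coeff a) + padicValInt p (h.coeff b) + 1) ∣
      ∑ x ∈ (Finset.HasAntidiagonal.antidiagonal (a + b)).erase (a, b), g.coeff x.1 * h.coeff x.2 := by
    apply Finset.dvd_sum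
    rintro ⟨i, j⟩ hij
    rw [Finset.mem_erase, Finset.HasAntidiagonal.mem_antidiagonal] at hij
    obtain ⟨hne, hij⟩ := hij
    simp only at hij
    by_cases hi : g.coeff i = 0
    · simp [hi]
    by_cases hj : h.coeff j = 0
    · simp [hj]
    rw [padicValInt_dvd_iff]
    right
    rw [padicValInt.mul hi hj]
    refine H i j hij ?_ hi hj
    rintro rfl
    apply hne
    ext <;> simp
    omega
  rw [dvd_add_left h2, padicValInt_dvd_iff, padicValInt.mul ha hb] at h1
  rcases h1 with h | h
  · exact mul_ne_zero ha hb h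
  · omega

lemma aux_C (w : ℕ → ℕ) (g : ℤ[X]) (hg : g ≠ 0) :
    ∃ a, g.coeff a ≠ 0 ∧ (∀ i, g.coeff i ≠ 0 → w a ≤ w i) ∧
      (∀ i, g.coeff i ≠ 0 → i < a → w a < w i) := by
  obtain ⟨a, ha, hmin⟩ := Finset.exists_min_image g.support (fun i => toLex (w i, i))
    (by simpa using hg)
  refine ⟨a, by simpa using ha, fun i hi => ?_, fun i hi hia => ?_⟩
  · have := hmin i (by simpa using hi)
    rw [Prod.Lex.le_iff] at this
    simp at this
    omega
  · have := hmin i (by simpa using hi)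
    rw [Prod.Lex.le_iff] at this
    simp at this
    omega

/-- Newton polygon information. -/
lemma aux_D (p q : ℕ) [Fact p.Prime] (hq : 1 ≤ q) (g h : ℤ[X]) (hg : g.Monic) (hh : h.Monic)
    (hY : g * h = C ((p : ℤ) ^ (2 * q + 2)) + C ((p : ℤ) ^ (2 * q)) * X ^ 2
        + C ((p : ℤ) ^ (2 * q + 4)) * X ^ 3 + X ^ (2 * q + 4)) 
    (hd : g.natDegree + h.natDegree = 2 * q + 4) :
    (q + 1 ∣ g.natDegree) ∨ (q + 1 ∣ h.natDegree) ∨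
    ∃ k l, k + l = 2 ∧ g.natDegree = (q + 1) * k + 1 ∧ h.natDegree = (q + 1) * l + 1 ∧
      padicValInt p (g.coeff 0) = q * k + 1 ∧ padicValInt p (h.coeff 0) = q * l + 1 := by
  have hp1 : (p : ℤ) ≠ 0 := by exact_mod_cast (Fact.out : p.Prime).ne_zero
  have vpow : ∀ k : ℕ, padicValInt p ((p : ℤ) ^ k) = k := by
    intro k
    have : ((p : ℤ) ^ k) = ((p ^ k : ℕ) : ℤ) := by push_cast; rfl
    rw [this, padicValInt.of_nat, padicValNat.prime_pow]
  have c0 : (g * h).coeff 0 = (p : ℤ) ^ (2 * q + 2) := by rw [hY]; simp only [coeff_add, coeff_C_mul, coeff_X_pow, coeff_C]; simp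
  have c1 : (g * h).coeff 1 = 0 := by
    rw [hY]; simp only [coeff_add, coeff_C_mul, coeff_X_pow, coeff_C]; simp
  have c2 : (g * h).coeff 2 = (p : ℤ) ^ (2 * q) := by
    rw [hY]; simp only [coeff_add, coeff_C_mul, coeff_X_pow, coeff_C]; simp; try omega
  have cn : (g * h).coeff (2 * q + 4) = 1 := by
    rw [hY]; simp only [coeff_add, coeff_C_mul, coeff_X_pow, coeff_C]; simp; try omega
  have cmin : ∀ i, (g * h).coeff i ≠ 0 → 
      2 * q * (q + 2) ≤ (q + 1) * padicValInt p ((g * h).coeff i) + q * i := by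
    intro i hi
    by_cases i0 : i = 0
    · subst i0; rw [c0, vpow]; nlinarith
    by_cases i2 : i = 2
    · subst i2; rw [c2, vpow]; nlinarith
    by_cases i3 : i = 3
    · subst i3
      have : (g * h).coeff 3 = (p : ℤ) ^ (2 * q + 4) := by
        rw [hY]; simp only [coeff_add, coeff_C_mul, coeff_X_pow, coeff_C]; simp; try omega
      rw [this, vpow]; nlinarith
    by_cases ii : i = 2 * q + 4
    · subst ii; rw [cn]; nlinarith
    exfalso; apply hi; rw [hY]; simp only [coeff_add, coeff_C_mul, coeff_X_pow, coeff_C, i0, i2, i3, ii]; simp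
  obtain ⟨a, ha, hga, hga'⟩ := aux_C (fun i => (q + 1) * padicValInt p (g.coeff i) + q * i) g hg.ne_zero
  obtain ⟨b, hb, hhb, hhb'⟩ := aux_C (fun i => (q + 1) * padicValInt p (h.coeff i) + q * i) h hh.ne_zero
  obtain ⟨B1, B2⟩ := aux_B p g h a b ha hb (by
    intro i j hij hia hi hj
    have e1 := hga i hi
    have e2 := hhb j hj
    have e : q * i + q * j = q * a + q * b := by rw [← mul_add, hij, mul_add]
    have : (q + 1) * padicValInt p (g.coeff a) + (q + 1) * padicValInt p (h.coeff b) <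
        (q + 1) * padicValInt p (g.coeff i) + (q + 1) * padicValInt p (h.coeff j) := by
      rcases lt_or_gt_of_ne hia with hlt | hlt
      · have e3 := hga' i hi hlt
        omega
      · have e3 := hhb' j hj (by omega)
        omega
    rw [← mul_add, ← mul_add] at this
    exact lt_of_mul_lt_mul_left this (by omega))
  have gd := hga g.natDegree (by rw [hg.coeff_natDegree]; simp)
  have hd' := hhb h.natDegree (by rw [hh.coeff_natDegree]; simp)
  rw [hg.coeff_natDegree] at gd
  rw [hh.coeff_natDegree] at hd'
  simp only [padicValInt.one, mul_zero, zero_add] at gd hd'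
  have M := cmin _ B1
  have B3 := Nat.mul_le_mul_left (q + 1) B2
  have hde : q * g.natDegree + q * h.natDegree = 2 * q * (q + 2) := by
    rw [← mul_add, hd]; ring
  rw [mul_add] at B3
  have Mab : q * (a + b) = q * a + q * b := mul_add _ _ _
  have hab : a + b = 2 := by
    have le2 : a + b ≤ 2 := by
      obtain ⟨i, j, hij, hi, hj, hv⟩ := aux_A p g h 2 (by rw [c2]; positivity)
      rw [c2, vpow] at hv
      have hv := Nat.mul_le_mul_left (q + 1) hv
      rw [mul_add] at hv
      by_contra hlt
      have e1 := hga i hi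
      have e2 := hhb j hj
      have e : q * i + q * j = q * 2 := by rw [← mul_add, hij]
      have e4 : (q + 1) * (2 * q) + q * 2 = 2 * q * (q + 2) := by ring
      rcases lt_or_ge i a with hlt | hlt
      · have e3 := hga' i hi hlt
        omega
      · have e3 := hhb' j hj (by omega)
        omega
    by_contra hne
    have : a + b = 0 ∨ a + b = 1 := by omega
    rcases this with h0 | h0
    · rw [h0, c0, vpow] at B3
      have ha0 : a = 0 := by omega
      have hb0 : b = 0 := by omega
      subst ha0 hb0
      nlinarith
    · rw [h0, c1] at B1
      exact B1 rfl
  have eqg : (q + 1) * padicValInt p (g.coeff a) + q * a = q * g.natDegree := by omega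
  have eqh : (q + 1) * padicValInt p (h.coeff b) + q * b = q * h.natDegree := by omega
  have key : ∀ (f : ℤ[X]) (c : ℕ), (q + 1) * padicValInt p (f.coeff c) + q * c = q * f.natDegree →
      ∃ k, f.natDegree = (q + 1) * k + c ∧ padicValInt p (f.coeff c) = q * k := by
    intro f c hf
    have hc : c ≤ f.natDegree := by
      by_contra hlt
      have : q * f.natDegree < q * c := by apply Nat.mul_lt_mul_of_pos_left <;> omega
      omega
    obtain ⟨d, hd⟩ := Nat.exists_eq_add_of_le hc
    have h1 : (q + 1) * padicValInt p (f.coeff c) = q * d := by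
      rw [hd, mul_add] at hf; omega
    have h2 : q + 1 ∣ d := by
      have : Nat.Coprime (q + 1) q := by simp
      exact this.dvd_of_dvd_mul_left ⟨_, h1.symm⟩
    obtain ⟨k, rfl⟩ := h2
    refine ⟨k, by omega, ?_⟩
    have : (q + 1) * padicValInt p (f.coeff c) = (q + 1) * (q * k) := by rw [h1]; ring
    exact Nat.eq_of_mul_eq_mul_left (by omega) this
  obtain ⟨k, hk, hvk⟩ := key g a eqg
  obtain ⟨l, hl, hvl⟩ := key h b eqh
  have : a = 0 ∨ b = 0 ∨ (a = 1 ∧ b = 1) := by omega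
  rcases this with h0 | h0 | ⟨rfl, rfl⟩
  · left; rw [hk, h0]; simp
  · right; left; rw [hl, h0]; simp
  · right; right
    have hkl : k + l = 2 := by
      have : (q + 1) * (k + l) = (q + 1) * 2 := by rw [mul_add]; omega
      exact Nat.eq_of_mul_eq_mul_left (by omega) this
    have m0 : g.coeff 0 * h.coeff 0 = (p : ℤ) ^ (2 * q + 2) := by rw [← c0, mul_coeff_zero]
    have m0' : g.coeff 0 * h.coeff 0 ≠ 0 := by rw [m0]; positivity
    have g0 := left_ne_zero_of_mul m0'
    have h0 := right_ne_zero_of_mul m0'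
    have vs : padicValInt p (g.coeff 0) + padicValInt p (h.coeff 0) = 2 * q + 2 := by
      rw [← padicValInt.mul g0 h0, m0, vpow]
    have e1 := hga' 0 g0 (by omega)
    have e2 := hhb' 0 h0 (by omega)
    rw [hvk] at e1
    rw [hvl] at e2
    have f1 : q * k < padicValInt p (g.coeff 0) := by
      apply lt_of_mul_lt_mul_left (a := q + 1) _ (by omega); omega
    have f2 : q * l < padicValInt p (h.coeff 0) := by
      apply lt_of_mul_lt_mul_left (a := q + 1) _ (by omega); omega
    have f3 : q * k + q * l = 2 * q := by rw [← mul_add, hkl]; ring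
    exact ⟨k, l, hkl, hk, hl, by omega, by omega⟩

/-- Archimedean size of the (scaled) roots. -/
lemma aux_R (P : ℝ) (hP : 2 ≤ P) (q : ℕ) (hq : 1 ≤ q) (y : ℂ)
    (hy : 1 + y ^ 2 + (P : ℂ) ^ 5 * y ^ 3 + (P : ℂ) ^ 2 * y ^ (2 * q + 4) = 0) :
    (‖y‖ ≤ 1 ∧ 1 < P ^ 2 * ‖y‖ ∧ ‖y‖ ^ 4 * (P ^ 2 * (P ^ 3 + 1)) ≤ 1) ∨
    (1 < ‖y‖ ∧ P ^ 3 - 1 / 2 ≤ ‖y‖ ^ (2 * q + 1) ∧ ‖y‖ ^ (2 * q + 1) ≤ P ^ 3 + 1 / 2) := by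
  have hP0 : 0 ≤ P := by linarith
  have hPn : ‖(P : ℂ)‖ = P := by simp [abs_of_nonneg hP0]
  have hu : 0 ≤ ‖y‖ := norm_nonneg y
  rcases le_or_gt ‖y‖ 1 with h1 | h1
  · left
    have hpw : ‖y‖ ^ (2 * q + 4) ≤ ‖y‖ ^ 6 := pow_le_pow_of_le_one hu h1 (by omega)
    have hpw0 : 0 ≤ ‖y‖ ^ (2 * q + 4) := by positivity
    have A : 1 ≤ ‖y‖ ^ 2 + P ^ 5 * ‖y‖ ^ 3 + P ^ 2 * ‖y‖ ^ (2 * q + 4) := by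
      have : (1 : ℂ) = -(y ^ 2 + (P : ℂ) ^ 5 * y ^ 3 + (P : ℂ) ^ 2 * y ^ (2 * q + 4)) := by
        linear_combination hy
      calc (1 : ℝ) = ‖(1 : ℂ)‖ := by simp
        _ = ‖y ^ 2 + (P : ℂ) ^ 5 * y ^ 3 + (P : ℂ) ^ 2 * y ^ (2 * q + 4)‖ := by
          rw [this, norm_neg]
        _ ≤ _ := by
          refine (norm_add₃_le).trans ?_
          simp only [norm_mul, norm_pow, hPn]; exact le_rfl
    have B : P ^ 5 * ‖y‖ ^ 3 ≤ 1 + ‖y‖ ^ 2 + P ^ 2 * ‖y‖ ^ (2 * q + 4) := by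
      have : (P : ℂ) ^ 5 * y ^ 3 = -(1 + y ^ 2 + (P : ℂ) ^ 2 * y ^ (2 * q + 4)) := by
        linear_combination hy
      calc _ = ‖(P : ℂ) ^ 5 * y ^ 3‖ := by simp only [norm_mul, norm_pow, hPn]
        _ = ‖1 + y ^ 2 + (P : ℂ) ^ 2 * y ^ (2 * q + 4)‖ := by
          rw [this, norm_neg]
        _ ≤ _ := by
          refine (norm_add₃_le).trans ?_
          simp only [norm_mul, norm_pow, hPn, norm_one]; exact le_rfl
    have A' : 1 ≤ ‖y‖ ^ 2 + P ^ 5 * ‖y‖ ^ 3 + P ^ 2 * ‖y‖ ^ 6 := by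
      have := mul_le_mul_of_nonneg_left hpw (sq_nonneg P); linarith
    have B' : P ^ 5 * ‖y‖ ^ 3 ≤ 1 + ‖y‖ ^ 2 + P ^ 2 * ‖y‖ ^ 6 := by
      have := mul_le_mul_of_nonneg_left hpw (sq_nonneg P); linarith
    clear A B hpw hpw0 hy hPn
    generalize ‖y‖ = u at *
    -- normalise
    set t := P * u with ht
    have ht0 : 0 ≤ t := by positivity
    have hut : 2 * u ≤ t := by nlinarith
    have e1 : P ^ 5 * u ^ 3 = P ^ 2 * t ^ 3 := by rw [ht]; ring
    have hP2 : 4 ≤ P ^ 2 := by nlinarith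
    have u2 : u ^ 2 ≤ 1 := by nlinarith
    have u6 : u ^ 6 ≤ 1 := pow_le_one₀ hu h1
    refine ⟨h1, ?_, ?_⟩
    · by_contra hc
      push Not at hc
      have k1 : u ≤ 1 / 4 := by nlinarith
      have k2 : t ≤ 1 / 2 := by
        have : P * t ≤ 1 := by rw [ht]; linarith
        nlinarith
      have k3 : P ^ 5 * u ^ 3 ≤ 1 / 2 := by
        have e : P ^ 5 * u ^ 3 = (P ^ 2 * u) ^ 2 * t := by rw [ht]; ring
        rw [e]
        have : (P ^ 2 * u) ^ 2 ≤ 1 := pow_le_one₀ (by positivity) hc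
        nlinarith
      have k4 : P ^ 2 * u ^ 6 ≤ 1 / 16 := by
        have e : P ^ 2 * u ^ 6 = (P ^ 2 * u) * (u ^ 5) := by ring
        have : u ^ 5 ≤ (1 / 4) ^ 5 := pow_le_pow_left₀ hu k1 5
        have : 0 ≤ u ^ 5 := by positivity
        rw [e]; nlinarith
      have k5 : u ^ 2 ≤ 1 / 16 := by nlinarith
      linarith
    · -- first t ^ 3 ≤ 3 / 2
      have t3 : t ^ 3 ≤ 3 / 2 := by
        have : P ^ 2 * t ^ 3 ≤ P ^ 2 * (3 / 2) := by nlinarith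
        exact le_of_mul_le_mul_left this (by positivity)
      have t1 : t ≤ 23 / 20 := by
        by_contra hc
        push Not at hc
        have := pow_le_pow_left₀ (by norm_num) hc.le 3
        norm_num at this
        linarith
      have hu1 : u ≤ 23 / 40 := by linarith
      have k4 : P ^ 2 * u ^ 6 ≤ 3 / 20 := by
        have e : P ^ 2 * u ^ 6 = t ^ 2 * u ^ 4 := by rw [ht]; ring
        have a1 : t ^ 2 ≤ (23 / 20) ^ 2 := pow_le_pow_left₀ ht0 t1 2
        have a2 : u ^ 4 ≤ (23 / 40) ^ 4 := pow_le_pow_left₀ hu hu1 4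
        rw [e]
        calc t ^ 2 * u ^ 4 ≤ (23 / 20) ^ 2 * (23 / 40) ^ 4 := by gcongr
          _ ≤ _ := by norm_num
      have k5 : u ^ 2 ≤ 7 / 20 := by nlinarith
      have k6 : P ^ 5 * u ^ 3 ≤ 3 / 2 := by linarith
      have P3 : 8 ≤ P ^ 3 := by nlinarith
      have k7 : P ^ 2 * (P ^ 3 + 1) ≤ 9 / 8 * P ^ 5 := by
        have : P ^ 5 = P ^ 2 * P ^ 3 := by ring
        rw [this]; nlinarith
      calc u ^ 4 * (P ^ 2 * (P ^ 3 + 1)) ≤ u ^ 4 * (9 / 8 * P ^ 5) := by gcongr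
        _ = 9 / 8 * u * (P ^ 5 * u ^ 3) := by ring
        _ ≤ 9 / 8 * (23 / 40) * (3 / 2) := by gcongr
        _ ≤ 1 := by norm_num
  · right
    have hu3 : 0 < ‖y‖ ^ 3 := by positivity
    have key : ‖(P : ℂ) ^ 5 + (P : ℂ) ^ 2 * y ^ (2 * q + 1)‖ ≤ 2 := by
      have e : y ^ 3 * ((P : ℂ) ^ 5 + (P : ℂ) ^ 2 * y ^ (2 * q + 1)) = -(1 + y ^ 2) := by
        linear_combination hy
      have e2 := congrArg norm e
      rw [norm_mul, norm_neg, norm_pow] at e2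
      have e3 : ‖1 + y ^ 2‖ ≤ 1 + ‖y‖ ^ 2 := by
        refine (norm_add_le _ _).trans ?_
        simp
      have e4 : 1 + ‖y‖ ^ 2 ≤ ‖y‖ ^ 3 * 2 := by nlinarith [sq_nonneg ‖y‖]
      have : ‖y‖ ^ 3 * ‖(P : ℂ) ^ 5 + (P : ℂ) ^ 2 * y ^ (2 * q + 1)‖ ≤ ‖y‖ ^ 3 * 2 := by
        linarith
      exact le_of_mul_le_mul_left this hu3
    have n1 : ‖(P : ℂ) ^ 5‖ = P ^ 5 := by rw [norm_pow, hPn]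
    have n2 : ‖(P : ℂ) ^ 2 * y ^ (2 * q + 1)‖ = P ^ 2 * ‖y‖ ^ (2 * q + 1) := by
      rw [norm_mul, norm_pow, norm_pow, hPn]
    have a1 := norm_sub_le_norm_add ((P : ℂ) ^ 5) ((P : ℂ) ^ 2 * y ^ (2 * q + 1))
    have a2 := norm_sub_le_norm_add ((P : ℂ) ^ 2 * y ^ (2 * q + 1)) ((P : ℂ) ^ 5)
    rw [add_comm ((P : ℂ) ^ 2 * y ^ (2 * q + 1))] at a2
    rw [n1, n2] at a1 a2
    have hP2 : 4 ≤ P ^ 2 := by nlinarith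
    have e5 : P ^ 5 = P ^ 2 * P ^ 3 := by ring
    rw [e5] at a1 a2
    refine ⟨h1, ?_, ?_⟩
    · by_contra hc; push Not at hc; nlinarith
    · by_contra hc; push Not at hc; nlinarith

/-- Multiset bound. -/
lemma aux_S (P : ℝ) (hP : 2 ≤ P) (q : ℕ) (hq : 1 ≤ q) (s : Multiset ℝ) 
    (hcard : s.card = q + 2) (hpos : ∀ u ∈ s, 0 ≤ u)
    (hs : ∀ u ∈ s, (u ≤ 1 ∧ 1 < P ^ 2 * u ∧ u ^ 4 * (P ^ 2 * (P ^ 3 + 1)) ≤ 1) ∨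
      (1 < u ∧ P ^ 3 - 1 / 2 ≤ u ^ (2 * q + 1) ∧ u ^ (2 * q + 1) ≤ P ^ 3 + 1 / 2)) :
    P * s.prod ≠ 1 := by
  classical
  have hP0 : 0 < P := by linarith
  set S := s.filter (fun u => u ≤ 1) with hS
  set L := s.filter (fun u => ¬ u ≤ 1) with hL
  have hsum : S + L = s := Multiset.filter_add_not _ _
  have hprod : s.prod = S.prod * L.prod := by rw [← hsum, Multiset.prod_add]
  have hc : S.card + L.card = q + 2 := by rw [← hcard, ← hsum, Multiset.card_add]
  have hS' : ∀ u ∈ S, 0 ≤ u ∧ u ≤ 1 ∧ 1 < P ^ 2 * u ∧ u ^ 4 * (P ^ 2 * (P ^ 3 + 1)) ≤ 1 := by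
    intro u hu
    obtain ⟨h1, h2⟩ := Multiset.mem_filter.1 hu
    rcases hs u h1 with h | h
    · exact ⟨hpos u h1, h⟩
    · linarith [h.1]
  have hL' : ∀ u ∈ L, 1 < u ∧ P ^ 3 - 1 / 2 ≤ u ^ (2 * q + 1) ∧
      u ^ (2 * q + 1) ≤ P ^ 3 + 1 / 2 := by
    intro u hu
    obtain ⟨h1, h2⟩ := Multiset.mem_filter.1 hu
    rcases hs u h1 with h | h
    · exact absurd h.1 h2
    · exact h
  have gen : ∀ (M : Multiset ℝ) (lo hi : ℝ), 0 ≤ lo → 0 ≤ hi →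
      (∀ u ∈ M, 0 ≤ u ∧ lo ≤ u ^ (2 * q + 1) ∧ u ^ (2 * q + 1) ≤ hi) →
      0 ≤ M.prod ∧ lo ^ M.card ≤ M.prod ^ (2 * q + 1) ∧ M.prod ^ (2 * q + 1) ≤ hi ^ M.card := by
    intro M lo hi hlo hhi
    induction M using Multiset.induction_on with
    | empty => simp
    | cons a M ih =>
      intro H
      obtain ⟨i0, i1, i2⟩ := ih (fun u hu => H u (Multiset.mem_cons_of_mem hu))
      obtain ⟨a0, a1, a2⟩ := H a (Multiset.mem_cons_self a M)
      rw [Multiset.prod_cons, Multiset.card_cons, mul_pow, pow_succ' lo, pow_succ' hi]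
      refine ⟨by positivity, ?_, ?_⟩ <;> gcongr
  have gen2 : ∀ (M : Multiset ℝ) (c : ℝ), 0 ≤ c → (∀ u ∈ M, 0 ≤ u ∧ u ≤ c) →
      0 ≤ M.prod ∧ M.prod ≤ c ^ M.card := by
    intro M c hc0
    induction M using Multiset.induction_on with
    | empty => simp
    | cons a M ih =>
      intro H
      obtain ⟨i0, i1⟩ := ih (fun u hu => H u (Multiset.mem_cons_of_mem hu))
      obtain ⟨a0, a1⟩ := H a (Multiset.mem_cons_self a M)
      rw [Multiset.prod_cons, Multiset.card_cons, pow_succ']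
      refine ⟨by positivity, ?_⟩; gcongr
  have P3 : 8 ≤ P ^ 3 := by
    have := pow_le_pow_left₀ (by norm_num) hP 3; norm_num at this; exact this
  obtain ⟨L0, L1, L2⟩ := gen L (P ^ 3 - 1 / 2) (P ^ 3 + 1 / 2) (by linarith) (by linarith)
    (fun u hu => ⟨by linarith [(hL' u hu).1], (hL' u hu).2⟩)
  rw [hprod]
  rcases Nat.lt_or_ge S.card 2 with hk | hk
  · -- at most one small root
    have Lge : P ≤ L.prod := by
      have h1 : P ^ 2 ≤ P ^ 3 - 1 / 2 := by nlinarith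
      have : P ^ (2 * q + 1) ≤ L.prod ^ (2 * q + 1) := by
        calc P ^ (2 * q + 1) ≤ P ^ (2 * L.card) := pow_le_pow_right₀ (by linarith) (by omega)
          _ = (P ^ 2) ^ L.card := by rw [pow_mul]
          _ ≤ (P ^ 3 - 1 / 2) ^ L.card := by gcongr
          _ ≤ _ := L1
      exact le_of_pow_le_pow_left₀ (by omega) L0 this
    have Sgt : 1 < P ^ 2 * S.prod := by
      have : S.card = 0 ∨ S.card = 1 := by omega
      rcases this with h | h
      · rw [Multiset.card_eq_zero] at h
        rw [h, Multiset.prod_zero]; nlinarith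
      · obtain ⟨u, hu⟩ := Multiset.card_eq_one.1 h
        have := (hS' u (by rw [hu]; simp)).2.2.1
        rw [hu]; simpa using this
    have : 0 < S.prod := by
      by_contra hc; push Not at hc; nlinarith [sq_nonneg P]
    have : P ^ 2 * S.prod ≤ P * (S.prod * L.prod) := by
      calc P ^ 2 * S.prod = P * (S.prod * P) := by ring
        _ ≤ _ := by gcongr
    intro h; linarith
  · have K0 : 0 < P ^ 2 * (P ^ 3 + 1) := by positivity
    set K := P ^ 2 * (P ^ 3 + 1) with hK
    set c := √(√(1 / K)) with hcdef
    have c4 : c ^ 4 = 1 / K := by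
      have : c ^ 4 = (c ^ 2) ^ 2 := by ring
      rw [this, hcdef, Real.sq_sqrt (by positivity), Real.sq_sqrt (by positivity)]
    have c0 : 0 ≤ c := by positivity
    have K1 : 1 ≤ K := by rw [hK]; nlinarith
    have c1 : c ≤ 1 := by
      apply le_of_pow_le_pow_left₀ (n := 4) (by omega) (by norm_num)
      rw [c4, one_pow, div_le_one K0]; exact K1
    obtain ⟨S0, S1⟩ := gen2 S c c0 (fun u hu => by
      obtain ⟨u0, u1, u2, u3⟩ := hS' u hu
      refine ⟨u0, le_of_pow_le_pow_left₀ (n := 4) (by omega) c0 ?_⟩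
      rw [c4, le_div_iff₀ K0]; exact u3)
    have S2 : S.prod ≤ c ^ 2 := S1.trans (pow_le_pow_of_le_one c0 c1 hk)
    have S3 : S.prod ^ 2 ≤ 1 / K := by
      rw [← c4]
      calc S.prod ^ 2 ≤ (c ^ 2) ^ 2 := by gcongr
        _ = c ^ 4 := by ring
    have L3 : L.prod ^ 2 ≤ P ^ 3 + 1 / 2 := by
      apply le_of_pow_le_pow_left₀ (n := 2 * q + 1) (by omega) (by linarith)
      calc (L.prod ^ 2) ^ (2 * q + 1) = (L.prod ^ (2 * q + 1)) ^ 2 := by ring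
        _ ≤ ((P ^ 3 + 1 / 2) ^ L.card) ^ 2 := by gcongr
        _ = (P ^ 3 + 1 / 2) ^ (L.card * 2) := by rw [pow_mul]
        _ ≤ _ := pow_le_pow_right₀ (by linarith) (by omega)
    intro h
    have h2 : P ^ 2 * (S.prod ^ 2 * L.prod ^ 2) = 1 := by
      rw [← mul_pow, ← mul_pow, h, one_pow]
    have h3 : P ^ 2 * (S.prod ^ 2 * L.prod ^ 2) ≤ P ^ 2 * (1 / K * (P ^ 3 + 1 / 2)) := by gcongr
    have h4 : P ^ 2 * (1 / K * (P ^ 3 + 1 / 2)) < 1 := by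
      rw [show P ^ 2 * (1 / K * (P ^ 3 + 1 / 2)) = P ^ 2 * (P ^ 3 + 1 / 2) / K by ring,
        div_lt_one K0, hK]
      have : 0 < P ^ 2 := by positivity
      nlinarith
    linarith

lemma aux_E (p : ℕ) [Fact p.Prime] (c : ℤ) (N : ℕ) (hc : c ∣ (p : ℤ) ^ N) :
    c.natAbs = p ^ padicValInt p c := by
  have h1 : c.natAbs ∣ p ^ N := by
    have := Int.natAbs_dvd_natAbs.2 hc
    simpa [Int.natAbs_pow] using this
  obtain ⟨k, _, hk⟩ := (Nat.dvd_prime_pow Fact.out).1 h1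
  rw [padicValInt, hk, padicValNat.prime_pow]

/-- No factor of degree one. -/
lemma aux_lin (p q : ℕ) [Fact p.Prime] (g h : ℤ[X]) (hg : g.Monic)
    (hY : g * h = C ((p : ℤ) ^ (2 * q + 2)) + C ((p : ℤ) ^ (2 * q)) * X ^ 2
        + C ((p : ℤ) ^ (2 * q + 4)) * X ^ 3 + X ^ (2 * q + 4))
    (hd : g.natDegree = 1) (hc : (g.coeff 0).natAbs = p) : False := by
  have hp2 : (2 : ℤ) ≤ p := by exact_mod_cast (Fact.out : p.Prime).two_le
  have hgX : g = X + C (g.coeff 0) := hg.eq_X_add_C hd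
  have ev := congrArg (eval (-(g.coeff 0))) hY
  have e0 : eval (-(g.coeff 0)) g = 0 := by
    conv_lhs => rw [hgX]
    simp
  rw [eval_mul, e0, zero_mul] at ev
  simp only [eval_add, eval_mul, eval_C, eval_pow, eval_X] at ev
  have hev : Even (2 * q + 4) := ⟨q + 2, by ring⟩
  have pos : (0 : ℤ) < (p : ℤ) ^ (2 * q) := by positivity
  rcases Int.natAbs_eq (g.coeff 0) with h1 | h1
  · rw [hc] at h1
    rw [h1, hev.neg_pow] at ev
    have : (p : ℤ) ^ (2 * q) * ((p : ℤ) ^ 2 * (2 + (p : ℤ) ^ 2 - (p : ℤ) ^ 5)) = 0 := by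
      linear_combination -ev
    have h2 : (2 + (p : ℤ) ^ 2 - (p : ℤ) ^ 5) < 0 := by
      have a1 : (4 : ℤ) ≤ (p : ℤ) ^ 2 := by nlinarith
      have a2 : (8 : ℤ) ≤ (p : ℤ) ^ 3 := by nlinarith
      have a3 : (p : ℤ) ^ 5 = (p : ℤ) ^ 2 * (p : ℤ) ^ 3 := by ring
      rw [a3]; nlinarith
    have : (p : ℤ) ^ (2 * q) * ((p : ℤ) ^ 2 * (2 + (p : ℤ) ^ 2 - (p : ℤ) ^ 5)) < 0 :=
      mul_neg_of_pos_of_neg pos (mul_neg_of_pos_of_neg (by positivity) h2)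
    omega
  · rw [hc] at h1
    rw [h1, neg_neg] at ev
    have : (0 : ℤ) < (p : ℤ) ^ (2 * q + 2) + (p : ℤ) ^ (2 * q) * (p : ℤ) ^ 2
        + (p : ℤ) ^ (2 * q + 4) * (p : ℤ) ^ 3 + (p : ℤ) ^ (2 * q + 4) := by positivity
    omega

/-- No balanced factor. -/
lemma aux_mid (p q : ℕ) [Fact p.Prime] (hq : 1 ≤ q) (g h : ℤ[X]) (hg : g.Monic)
    (hY : g * h = C ((p : ℤ) ^ (2 * q + 2)) + C ((p : ℤ) ^ (2 * q)) * X ^ 2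
        + C ((p : ℤ) ^ (2 * q + 4)) * X ^ 3 + X ^ (2 * q + 4))
    (hd : g.natDegree = q + 2) (hc : (g.coeff 0).natAbs = p ^ (q + 1)) : False := by
  have hp2 : (2 : ℝ) ≤ p := by exact_mod_cast (Fact.out : p.Prime).two_le
  have hp0 : (p : ℂ) ≠ 0 := by exact_mod_cast (Fact.out : p.Prime).ne_zero
  have hp0' : (p : ℝ) ≠ 0 := by positivity
  set G : ℂ[X] := g.map (Int.castRingHom ℂ) with hG
  have hGm : G.Monic := hg.map _
  have hGd : G.natDegree = q + 2 := by rw [hG, hg.natDegree_map, hd]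
  have hspl : G.Splits := IsAlgClosed.splits G
  have hcard : G.roots.card = q + 2 := by rw [← hGd, hspl.natDegree_eq_card_roots]
  have hcoef := hspl.coeff_zero_eq_prod_roots_of_monic hGm
  have hn : ‖G.coeff 0‖ = (p : ℝ) ^ (q + 1) := by
    have h1 : G.coeff 0 = ((g.coeff 0 : ℤ) : ℂ) := by rw [hG, coeff_map]; simp
    rw [h1, Complex.norm_intCast, ← Int.cast_abs, Int.abs_eq_natAbs, hc]
    push_cast; rfl
  have hprod : (G.roots.map (fun z => ‖z‖)).prod = (p : ℝ) ^ (q + 1) := by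
    rw [← hn, hcoef, norm_mul, norm_pow, norm_neg, norm_one, one_pow, one_mul]
    exact (Multiset.prod_hom G.roots (normHom : ℂ →*₀ ℝ))
  apply aux_S (p : ℝ) hp2 q hq (G.roots.map (fun z => ‖z / (p : ℂ)‖))
  · rw [Multiset.card_map, hcard]
  · intro u hu
    obtain ⟨z, _, rfl⟩ := Multiset.mem_map.1 hu
    exact norm_nonneg _
  · intro u hu
    obtain ⟨z, hz, rfl⟩ := Multiset.mem_map.1 hu
    apply aux_R (p : ℝ) hp2 q hq
    have hz0 : eval z G = 0 := (mem_roots'.1 hz).2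
    have e := congrArg (fun f : ℤ[X] => eval z (f.map (Int.castRingHom ℂ))) hY
    simp only [Polynomial.map_mul, eval_mul, ← hG, hz0, zero_mul] at e
    simp only [Polynomial.map_add, Polynomial.map_mul, Polynomial.map_pow, map_C, map_X, eval_add,
      eval_mul, eval_pow, eval_C, eval_X, map_pow] at e
    simp only [eq_intCast, Int.cast_natCast] at e
    obtain ⟨y, rfl⟩ : ∃ y, z = p * y := ⟨z / p, by field_simp⟩
    have hyy : (p : ℂ) * y / p = y := by field_simp
    rw [hyy]
    have hne : (p : ℂ) ^ (2 * q + 2) ≠ 0 := pow_ne_zero _ hp0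
    apply mul_left_cancel₀ hne
    rw [mul_pow, mul_pow, mul_pow] at e
    push_cast
    linear_combination -e
  · have : (G.roots.map (fun z => ‖z / (p : ℂ)‖)).prod * (p : ℝ) ^ (q + 2) = (p : ℝ) ^ (q + 1) := by
      rw [← hprod, ← hcard]
      have : (fun z : ℂ => ‖z / (p : ℂ)‖) = fun z : ℂ => ‖z‖ / (p : ℝ) := by
        funext z; simp
      rw [this, Multiset.prod_map_div, Multiset.map_const', Multiset.prod_replicate]
      field_simp
    have h2 : (p : ℝ) ^ (q + 1) ≠ 0 := by positivity
    apply mul_right_cancel₀ h2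
    linear_combination this

lemma aux_main (p q : ℕ) (hp : p.Prime) (hq : 1 ≤ q) (Y : ℤ[X]) 
    (hYdef : Y = C ((p : ℤ) ^ (2 * q + 2)) + C ((p : ℤ) ^ (2 * q)) * X ^ 2
        + C ((p : ℤ) ^ (2 * q + 4)) * X ^ 3 + X ^ (2 * q + 4)) :
    Irreducible Y ∨ ∃ g : ℤ[X], g ∣ Y ∧ 0 < g.natDegree ∧ g.natDegree < 2 * q + 4 ∧
      q + 1 ∣ g.natDegree := by
  have := Fact.mk hp
  have hlow : (C ((p : ℤ) ^ (2 * q + 2)) + C ((p : ℤ) ^ (2 * q)) * X ^ 2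
        + C ((p : ℤ) ^ (2 * q + 4)) * X ^ 3).degree < ((2 * q + 4 : ℕ) : WithBot ℕ) := by
    refine lt_of_le_of_lt (b := ((3 : ℕ) : WithBot ℕ)) ?_ (by exact_mod_cast (by omega))
    generalize (p : ℤ) ^ (2 * q + 2) = a
    generalize (p : ℤ) ^ (2 * q + 4) = b
    generalize (p : ℤ) ^ (2 * q) = c
    compute_degree
    norm_num
  have hYm : Y.Monic := by
    rw [hYdef, add_comm]; exact monic_X_pow_add hlow
  have hYd : Y.natDegree = 2 * q + 4 := by
    apply natDegree_eq_of_degree_eq_some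
    rw [hYdef, degree_add_eq_right_of_degree_lt (by rw [degree_X_pow]; exact hlow), degree_X_pow]
  by_cases hirr : Irreducible Y
  · exact Or.inl hirr
  right
  rw [hYm.irreducible_iff_natDegree'] at hirr
  have hY1 : Y ≠ 1 := by rintro rfl; simp at hYd
  simp only [not_and, not_forall, not_not] at hirr
  obtain ⟨g, h, hg, hh, hgh, hmem⟩ := hirr hY1
  rw [Finset.mem_Ioc, hYd] at hmem
  have hdeg : g.natDegree + h.natDegree = 2 * q + 4 := by
    rw [← hYd, ← hgh, hg.natDegree_mul hh]
  have hgY := hgh.trans hYdef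
  have hhY : h * g = _ := (mul_comm h g).trans hgY
  have c0 : g.coeff 0 * h.coeff 0 = (p : ℤ) ^ (2 * q + 2) := by
    rw [← mul_coeff_zero, hgY]
    simp only [coeff_add, coeff_C_mul, coeff_X_pow, coeff_C]; simp
  have eg := aux_E p (g.coeff 0) (2 * q + 2) ⟨_, c0.symm⟩
  have eh := aux_E p (h.coeff 0) (2 * q + 2) ⟨_, by rw [← c0, mul_comm]⟩
  rcases aux_D p q hq g h hg hh hgY hdeg with hdv | hdv | ⟨k, l, hkl, hk, hl, vk, vl⟩
  · exact ⟨g, ⟨h, hgh.symm⟩, by omega, by omega, hdv⟩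
  · exact ⟨h, ⟨g, by rw [mul_comm, hgh]⟩, by omega, by omega, hdv⟩
  · exfalso
    rw [vk] at eg
    rw [vl] at eh
    have : k = 0 ∨ k = 1 ∨ l = 0 := by omega
    rcases this with rfl | rfl | rfl
    · exact aux_lin p q g h hg hgY (by simpa using hk) (by simpa using eg)
    · exact aux_mid p q hq g h hg hgY (by omega) (by simpa using eg)
    · exact aux_lin p q h g hh hhY (by simpa using hl) (by simpa using eh)


/-- **Example 2.** Let `p` be a prime and `n ≥ 6` even.  Then
`Y(x) = pⁿ⁻² + pⁿ⁻⁴x² + pⁿx³ + xⁿ ∈ ℤ[x]` is either irreducible over `ℤ`, or has a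
(nontrivial, proper) factor whose degree is a multiple of `(n-2)/2`. -/
theorem example_two (p : ℕ) (hp : p.Prime) (n : ℕ) (hn : 6 ≤ n) (heven : Even n) :
    Irreducible (C ((p : ℤ) ^ (n - 2)) + C ((p : ℤ) ^ (n - 4)) * X ^ 2
        + C ((p : ℤ) ^ n) * X ^ 3 + X ^ n) ∨
      ∃ g : ℤ[X], g ∣ (C ((p : ℤ) ^ (n - 2)) + C ((p : ℤ) ^ (n - 4)) * X ^ 2
          + C ((p : ℤ) ^ n) * X ^ 3 + X ^ n) ∧
        0 < g.natDegree ∧ g.natDegree < n ∧ (n - 2) / 2 ∣ g.natDegree := by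
  obtain ⟨r, hr⟩ := heven
  obtain ⟨q, rfl⟩ : ∃ q, n = 2 * q + 4 := ⟨r - 2, by omega⟩
  have e1 : 2 * q + 4 - 2 = 2 * q + 2 := by omega
  have e2 : 2 * q + 4 - 4 = 2 * q := by omega
  have e3 : (2 * q + 2) / 2 = q + 1 := by omega
  rw [e1, e2, e3]
  exact aux_main p q hp (by omega) _ rfl
end

section
/- Let K be a field of characteristic zero, n > 2, and d a divisor of n-1. Let a_0(x), a_1(x) ∈ K[x] each be of degree d. Then, viewing Z(x,y) = a_0(x) + a_1(x)·y + y^n as a polynomial in y over K[x], any factorization of Z in K[x][y] has a factor whose degree in y is a multiple of (n-1)/d. -/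
open Polynomial

/-- The substitution `x ↦ T^e`, `y ↦ Y T`. -/
noncomputable def wtHom (K : Type*) [Field K] (e : ℕ) : (K[X])[X] →+* (K[X])[X] :=
  eval₂RingHom ((mapRingHom (C : K →+* K[X])).comp (expand K e : K[X] →+* K[X])) (C X * X)

theorem wtHom_coeff (K : Type*) [Field K] (e : ℕ) (g : (K[X])[X]) (k j : ℕ) :
    (((wtHom K e) g).coeff k).coeff j =
      if j ≤ k then (expand K e (g.coeff j)).coeff (k - j) else 0 := by
  induction g using Polynomial.induction_on' with
  | add p q hp hq =>
    rw [map_add, coeff_add, coeff_add, hp, hq, coeff_add, map_add, coeff_add]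
    split_ifs <;> simp
  | monomial m a =>
    have : (wtHom K e) (monomial m a) =
        (map (C : K →+* K[X]) (expand K e a) * C (X ^ m)) * X ^ m := by
      simp [wtHom, mul_pow, mul_assoc]
    rw [this, coeff_mul_X_pow', coeff_monomial]
    by_cases hm : m = j
    · subst hm
      rw [if_pos rfl]
      split_ifs with h
      · rw [coeff_mul_C, coeff_map, coeff_C_mul]
        simp
      · simp
    · simp only [hm, if_false, map_zero, coeff_zero, ite_self]
      split_ifs with h
      · rw [coeff_mul_C, coeff_map, coeff_C_mul, coeff_X_pow]
        simp [Ne.symm hm]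
      · simp

theorem wtHom_natDegree_ge (K : Type*) [Field K] (e : ℕ) (he : 0 < e) (g : (K[X])[X])
    (hg : IsUnit g.leadingCoeff) : g.natDegree ≤ ((wtHom K e) g).natDegree := by
  apply le_natDegree_of_ne_zero
  intro h0
  have h1 := wtHom_coeff K e g g.natDegree g.natDegree
  rw [h0] at h1
  simp only [coeff_zero, le_refl, if_true, Nat.sub_self] at h1
  rw [coeff_expand he] at h1
  simp only [dvd_zero, if_true, Nat.zero_div] at h1
  obtain ⟨c, hc, hc'⟩ := Polynomial.isUnit_iff.1 hg
  rw [coeff_natDegree, ← hc', coeff_C_zero] at h1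
  exact hc.ne_zero h1.symm

theorem wtHom_dvd (K : Type*) [Field K] (e : ℕ) (he : 0 < e) (g : (K[X])[X])
    (hg : ((wtHom K e) g).leadingCoeff.coeff 0 ≠ 0) : e ∣ ((wtHom K e) g).natDegree := by
  by_contra h
  apply hg
  rw [leadingCoeff, wtHom_coeff, coeff_expand he]
  simp [h]

/-- **Example 3.** Let `K` be a field of characteristic zero, `n > 2`, and `d` a divisor of
`n - 1`.  Let `a₀(x), a₁(x) ∈ K[x]` each have degree `d`.  Then any factorization of
`Z(x,y) = a₀(x) + a₁(x)y + yⁿ` in `K[x][y]` has a factor whose degree in `y` is a multiple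
of `(n-1)/d`. -/
theorem example_three (K : Type*) [Field K] [CharZero K]
    (n d : ℕ) (hn : 2 < n) (hd : d ∣ n - 1)
    (a₀ a₁ : K[X]) (ha₀ : a₀.natDegree = d) (ha₁ : a₁.natDegree = d) :
    ∀ g h : (K[X])[X], C a₀ + C a₁ * X + X ^ n = g * h →
      (n - 1) / d ∣ g.natDegree ∨ (n - 1) / d ∣ h.natDegree := by
  intro g h hgh
  obtain ⟨e, he⟩ := hd
  have hd0 : 0 < d := by
    rcases Nat.eq_zero_or_pos d with h | h
    · subst h; omega
    · exact h
  have he0 : 0 < e := by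
    rcases Nat.eq_zero_or_pos e with h | h
    · subst h; omega
    · exact h
  rw [he, Nat.mul_div_cancel_left _ hd0]
  have hZdeg : (C a₀ + C a₁ * X + X ^ n : (K[X])[X]).natDegree = n := by
    compute_degree!
    all_goals first | omega | skip
    all_goals simp [show n ≠ 0 by omega, show n ≠ 1 by omega, show 1 ≠ n by omega]
  have hc (j : ℕ) : (C a₀ + C a₁ * X + X ^ n : (K[X])[X]).coeff j =
      if j = 0 then a₀ else if j = 1 then a₁ else if j = n then 1 else 0 := by
    rcases j with _ | _ | j
    · simp [coeff_X_pow, show 0 ≠ n by omega]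
    · simp [coeff_X_pow, show 1 ≠ n by omega, coeff_C]
    · simp [coeff_X_pow, coeff_C, coeff_X]
  have hZlc : (C a₀ + C a₁ * X + X ^ n : (K[X])[X]).leadingCoeff = 1 := by
    rw [leadingCoeff, hZdeg, hc]
    simp [show n ≠ 0 by omega, show n ≠ 1 by omega]
  have hlc : g.leadingCoeff * h.leadingCoeff = 1 := by
    rw [← leadingCoeff_mul, ← hgh, hZlc]
  have hug : IsUnit g.leadingCoeff := IsUnit.of_mul_eq_one _ hlc
  have huh : IsUnit h.leadingCoeff := IsUnit.of_mul_eq_one _ (by rw [mul_comm]; exact hlc)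
  have hg0 : g ≠ 0 := by rintro rfl; simp at hlc
  have hh0 : h ≠ 0 := by rintro rfl; simp at hlc
  have hsum : g.natDegree + h.natDegree = n := by
    rw [← natDegree_mul hg0 hh0, ← hgh, hZdeg]
  have h1g := wtHom_natDegree_ge K e he0 g hug
  have h1h := wtHom_natDegree_ge K e he0 h huh
  have hle : ((wtHom K e) (C a₀ + C a₁ * X + X ^ n)).natDegree ≤ n := by
    rw [natDegree_le_iff_coeff_eq_zero]
    intro k hk
    ext j
    rw [wtHom_coeff, hc, coeff_zero]
    split_ifs with h1 h2 h3 h4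
    · apply coeff_eq_zero_of_natDegree_lt
      rw [natDegree_expand, ha₀, ← he]; omega
    · apply coeff_eq_zero_of_natDegree_lt
      rw [natDegree_expand, ha₁, ← he]; omega
    · rw [map_one, coeff_one, if_neg (by omega)]
    · simp
    · rfl
  have hcn : (((wtHom K e) (C a₀ + C a₁ * X + X ^ n)).coeff n).coeff 1 ≠ 0 := by
    rw [wtHom_coeff, hc]
    rw [if_pos (by omega), if_neg one_ne_zero, if_pos rfl, he, coeff_expand_mul he0, ← ha₁,
      coeff_natDegree, leadingCoeff_ne_zero]
    rintro rfl
    simp at ha₁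
    omega
  have hdeg : ((wtHom K e) (C a₀ + C a₁ * X + X ^ n)).natDegree = n := by
    refine le_antisymm hle (le_natDegree_of_ne_zero ?_)
    intro h0
    rw [h0] at hcn
    simp at hcn
  have hlc1 : ((wtHom K e) (C a₀ + C a₁ * X + X ^ n)).leadingCoeff.coeff 1 ≠ 0 := by
    rw [leadingCoeff, hdeg]; exact hcn
  rw [hgh, map_mul] at hdeg hlc1
  have hne : (wtHom K e) g * (wtHom K e) h ≠ 0 := by
    intro h0
    rw [h0] at hlc1
    simp at hlc1
  rw [natDegree_mul (left_ne_zero_of_mul hne) (right_ne_zero_of_mul hne)] at hdeg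
  rw [leadingCoeff_mul, mul_coeff_one] at hlc1
  by_cases hP : ((wtHom K e) g).leadingCoeff.coeff 0 = 0
  · right
    have hQ : ((wtHom K e) h).leadingCoeff.coeff 0 ≠ 0 := by
      intro hQ
      simp [hP, hQ] at hlc1
    have := wtHom_dvd K e he0 h hQ
    rwa [show ((wtHom K e) h).natDegree = h.natDegree by omega] at this
  · left
    have := wtHom_dvd K e he0 g hP
    rwa [show ((wtHom K e) g).natDegree = g.natDegree by omega] at this
end
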